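/- The Alpert refinement coefficients satisfy the partial difference equation: for all natural numbers i, j with 1 ≤ i and j ≤ i (using the convention c_{a,b} = 0 whenever b > a, and omitting the term involving c_{i,j−1} when j = 0), (j/sqrt((2j+1)(2j−1)))·c_{i,j−1} + c_{i,j} + ((j+1)/sqrt((2j+3)(2j+1)))·c_{i,j+1} = (2i/sqrt((2i+1)(2i−1)))·c_{i−1,j} + (2(i+1)/sqrt((2i+3)(2i+1)))·c_{i+1,j}. -/

import Mathlib

/-!
Put `s = 2t - 1`. The orthonormal Legendre polynomials satisfy the three-term recurrence
`t p̂_n(t) = α_n p̂_{n-1}(t) + α_{n+1} p̂_{n+1}(t)` with `α_n = n / √((2n+1)(2n-1))`.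
Applied to `p̂_j(s)`, it turns the left-hand side of the equation into
`2 ∫ p̂_i(t) (1 + s) p̂_j(s) dt`; applied to `p̂_i(t)`, it turns the right-hand side into
`2 ∫ 2t p̂_i(t) p̂_j(s) dt`. These agree because `1 + s = 2t`.

The recurrence is derived from the Rodrigues formula. With `R_n = dⁿ/dxⁿ (x² - 1)ⁿ` it reads
`2(2n+1) x R_n = R_{n+1} + 4n² R_{n-1}` (`rodrigues_recurrence`); it follows by computing
`R_{n+1}` from one and from two explicit derivatives of `(x² - 1)^{n+1}` and eliminating
`d^{n-1}/dx^{n-1} (x² - 1)ⁿ`.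
-/

open MeasureTheory

/-- The orthonormal Legendre polynomial of degree `n` on `[-1,1]`,
`p̂_n(t) = sqrt((2n+1)/2) · (1/(2^n n!)) dⁿ/dtⁿ (t²-1)ⁿ`. -/
noncomputable def legendreHat (n : ℕ) : ℝ → ℝ := fun t =>
  Real.sqrt ((2 * n + 1) / 2) * ((1 : ℝ) / (2 ^ n * n.factorial)) *
    iteratedDeriv n (fun s => (s ^ 2 - 1) ^ n) t

/-- The Alpert refinement coefficients `c_{i,j} = 2∫_0^1 p̂_i(t) p̂_j(2t-1) dt`. -/
noncomputable def alpertC (i j : ℕ) : ℝ :=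
  2 * ∫ t in (0:ℝ)..1, legendreHat i t * legendreHat j (2 * t - 1)

open Polynomial in
/-- The unnormalized Rodrigues polynomial `dⁿ/dxⁿ (x² - 1)ⁿ`, equal to `2ⁿ n! P_n`. -/
noncomputable def rodrigues (n : ℕ) : ℝ[X] := derivative^[n] ((X ^ 2 - 1) ^ n)

/-- The factor `√((2n+1)/2) / (2ⁿ n!)` that normalizes `rodrigues n` in `L²[-1,1]`. -/
noncomputable def rodriguesNorm (n : ℕ) : ℝ :=
  Real.sqrt ((2 * n + 1) / 2) * ((1 : ℝ) / (2 ^ n * n.factorial))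

/-- The off-diagonal entry `α_{n+1} = (n+1) / √((2n+3)(2n+1))` of the Legendre Jacobi matrix. -/
noncomputable def jacobiCoeff (n : ℕ) : ℝ :=
  ((n : ℝ) + 1) / Real.sqrt ((2 * n + 3) * (2 * n + 1))

open Polynomial in
theorem legendreHat_eq (n : ℕ) (t : ℝ) :
    legendreHat n t = rodriguesNorm n * (rodrigues n).eval t := by
  have h (p : ℝ[X]) (k : ℕ) : iteratedDeriv k (fun s => p.eval s) =
      fun s => (derivative^[k] p).eval s := by
    induction k with
    | zero => simp
    | succ k ih =>
      funext s
      rw [iteratedDeriv_succ, ih, Polynomial.deriv, Function.iterate_succ_apply']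
  have h2 := congrFun (h ((X ^ 2 - 1) ^ n) n) t
  simp only [eval_pow, eval_sub, eval_X, eval_one] at h2
  rw [legendreHat, h2, rodriguesNorm, rodrigues]

theorem continuous_legendreHat (n : ℕ) : Continuous (legendreHat n) := by
  rw [funext (legendreHat_eq n)]
  exact continuous_const.mul (rodrigues n).continuous

open Polynomial in
theorem rodrigues_recurrence (n : ℕ) (t : ℝ) :
    2 * (2 * n + 3) * t * (rodrigues (n + 1)).eval t =
      (rodrigues (n + 2)).eval t + 4 * (n + 1) ^ 2 * (rodrigues n).eval t := by
  have hC2 : (C 2 : ℝ[X]) = 2 := rfl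
  have hC3 : (C 3 : ℝ[X]) = 3 := rfl
  have hC4 : (C 4 : ℝ[X]) = 4 := rfl
  have d1 (m : ℕ) : derivative ((X ^ 2 - 1 : ℝ[X]) ^ (m + 1)) =
      C (2 * (m + 1) : ℝ) * (X * (X ^ 2 - 1) ^ m) := by
    simp [derivative_pow, hC2]
    ring
  have d2 : derivative (derivative ((X ^ 2 - 1 : ℝ[X]) ^ (n + 2))) =
      C (2 * (n + 2) * (2 * n + 3) : ℝ) * (X ^ 2 - 1) ^ (n + 1) +
        C (4 * (n + 2) * (n + 1) : ℝ) * (X ^ 2 - 1) ^ n := by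
    rw [d1 (n + 1), derivative_C_mul, derivative_mul, d1 n]
    simp [hC2, hC3, hC4]
    ring
  have e1 : rodrigues (n + 2) = C (2 * (n + 2) : ℝ) * (X * rodrigues (n + 1) +
      C (n + 1 : ℝ) * derivative^[n] ((X ^ 2 - 1) ^ (n + 1))) := by
    rw [rodrigues, Function.iterate_succ_apply, d1 (n + 1), iterate_derivative_C_mul,
      mul_comm X, iterate_derivative_mul_X, rodrigues]
    simp [hC2]
    ring
  have e2 : rodrigues (n + 2) =
      C (2 * (n + 2) * (2 * n + 3) : ℝ) * derivative^[n] ((X ^ 2 - 1) ^ (n + 1)) +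
        C (4 * (n + 2) * (n + 1) : ℝ) * rodrigues n := by
    rw [rodrigues, Function.iterate_succ_apply, Function.iterate_succ_apply, d2,
      iterate_map_add, iterate_derivative_C_mul, iterate_derivative_C_mul, rodrigues]
  have f1 := congrArg (eval t) e1
  have f2 := congrArg (eval t) e2
  simp only [eval_add, eval_mul, eval_C, eval_X] at f1 f2
  have hn : (n : ℝ) + 2 ≠ 0 := by positivity
  apply mul_left_cancel₀ hn
  linear_combination (-(2 * n + 3) : ℝ) * f1 + (n + 1 : ℝ) * f2

theorem jacobiCoeff_eq (n : ℕ) :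
    jacobiCoeff n = (n + 1) / (Real.sqrt (2 * n + 3) * Real.sqrt (2 * n + 1)) := by
  rw [jacobiCoeff, Real.sqrt_mul (by positivity)]

theorem jacobiCoeff_mul_norm_succ (n : ℕ) :
    jacobiCoeff n * rodriguesNorm (n + 1) = rodriguesNorm n / (2 * (2 * n + 1)) := by
  have e : (2 * ((n + 1 : ℕ) : ℝ) + 1) = 2 * n + 3 := by push_cast; ring
  rw [jacobiCoeff_eq, rodriguesNorm, rodriguesNorm, e, Real.sqrt_div (by positivity),
    Real.sqrt_div (by positivity), Nat.factorial_succ]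
  have p1 : 0 < Real.sqrt (2 * n + 1) := by positivity
  have p3 : 0 < Real.sqrt (2 * n + 3) := by positivity
  push_cast
  field_simp
  rw [Real.sq_sqrt (by positivity)]
  ring

theorem jacobiCoeff_mul_norm (n : ℕ) :
    jacobiCoeff n * rodriguesNorm n =
      rodriguesNorm (n + 1) * (2 * (n + 1) ^ 2) / (2 * n + 3) := by
  have e : (2 * ((n + 1 : ℕ) : ℝ) + 1) = 2 * n + 3 := by push_cast; ring
  rw [jacobiCoeff_eq, rodriguesNorm, rodriguesNorm, e, Real.sqrt_div (by positivity),
    Real.sqrt_div (by positivity), Nat.factorial_succ]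
  have p1 : 0 < Real.sqrt (2 * n + 1) := by positivity
  have p3 : 0 < Real.sqrt (2 * n + 3) := by positivity
  push_cast
  field_simp
  rw [Real.sq_sqrt (by positivity)]
  ring

theorem mul_legendreHat_zero (t : ℝ) :
    t * legendreHat 0 t = jacobiCoeff 0 * legendreHat 1 t := by
  have h := jacobiCoeff_mul_norm_succ 0
  have r : (rodrigues 1).eval t = 2 * t := by
    simp [rodrigues, one_add_one_eq_two]
  have r0 : (rodrigues 0).eval t = 1 := by simp [rodrigues]
  norm_num at h
  rw [legendreHat_eq, legendreHat_eq, r, r0]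
  linear_combination -2 * t * h

theorem mul_legendreHat_succ (n : ℕ) (t : ℝ) :
    t * legendreHat (n + 1) t =
      jacobiCoeff n * legendreHat n t + jacobiCoeff (n + 1) * legendreHat (n + 2) t := by
  have h1 := jacobiCoeff_mul_norm n
  have h2 := jacobiCoeff_mul_norm_succ (n + 1)
  have r := rodrigues_recurrence n t
  rw [legendreHat_eq, legendreHat_eq, legendreHat_eq, ← mul_assoc, ← mul_assoc, ← mul_assoc,
    h1, h2]
  have e : (2 * ((n + 1 : ℕ) : ℝ) + 1) = 2 * n + 3 := by push_cast; ring
  rw [e]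
  have : (2 * (n : ℝ) + 3) ≠ 0 := by positivity
  field_simp
  linear_combination rodriguesNorm (n + 1) * r

/-- The three-term recurrence in the shape of the difference equation, with the `p̂_{n-1}` term
dropped at `n = 0`. -/
theorem mul_legendreHat (n : ℕ) (t : ℝ) :
    t * legendreHat n t =
      (if n = 0 then 0 else (n : ℝ) / Real.sqrt ((2 * n + 1) * (2 * n - 1))) *
        legendreHat (n - 1) t +
      ((n : ℝ) + 1) / Real.sqrt ((2 * n + 3) * (2 * n + 1)) * legendreHat (n + 1) t := by
  cases n with
  | zero =>
    rw [mul_legendreHat_zero, jacobiCoeff]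
    simp
  | succ n =>
    rw [mul_legendreHat_succ, jacobiCoeff, jacobiCoeff, if_neg n.succ_ne_zero,
      Nat.add_sub_cancel]
    have e : (2 * ((n + 1 : ℕ) : ℝ) + 1) * (2 * ((n + 1 : ℕ) : ℝ) - 1) =
        (2 * n + 3) * (2 * n + 1) := by push_cast; ring
    rw [e]
    push_cast
    rfl

theorem alpertC_partial_difference (i j : ℕ) (hi : 1 ≤ i) (hj : j ≤ i) :
    (if j = 0 then 0 else
        (j : ℝ) / Real.sqrt ((2 * j + 1) * (2 * j - 1)) * alpertC i (j - 1)) +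
      alpertC i j +
      ((j : ℝ) + 1) / Real.sqrt ((2 * j + 3) * (2 * j + 1)) * alpertC i (j + 1) =
    2 * i / Real.sqrt ((2 * i + 1) * (2 * i - 1)) * alpertC (i - 1) j +
      2 * ((i : ℝ) + 1) / Real.sqrt ((2 * i + 3) * (2 * i + 1)) * alpertC (i + 1) j := by
  have hI (a b : ℕ) (x : ℝ) : IntervalIntegrable
      (fun t => x * (legendreHat a t * legendreHat b (2 * t - 1))) volume 0 1 := by
    have ha := continuous_legendreHat a
    have hb := continuous_legendreHat b
    exact Continuous.intervalIntegrable (by fun_prop) _ _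
  have hc (a b : ℕ) (x : ℝ) : x * alpertC a b =
      2 * ∫ t in (0:ℝ)..1, x * (legendreHat a t * legendreHat b (2 * t - 1)) := by
    rw [intervalIntegral.integral_const_mul, alpertC]
    ring
  have hif : (if j = 0 then 0 else
      (j : ℝ) / Real.sqrt ((2 * j + 1) * (2 * j - 1)) * alpertC i (j - 1)) =
      (if j = 0 then 0 else (j : ℝ) / Real.sqrt ((2 * j + 1) * (2 * j - 1))) *
        alpertC i (j - 1) := by
    split_ifs <;> simp
  rw [hif, ← one_mul (alpertC i j), hc, hc, hc, hc, hc, ← mul_add, ← mul_add, ← mul_add,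
    ← intervalIntegral.integral_add (hI _ _ _) (hI _ _ _),
    ← intervalIntegral.integral_add ((hI _ _ _).add (hI _ _ _)) (hI _ _ _),
    ← intervalIntegral.integral_add (hI _ _ _) (hI _ _ _)]
  congr 1
  refine intervalIntegral.integral_congr fun t _ => ?_
  have r1 := mul_legendreHat j (2 * t - 1)
  have r2 := mul_legendreHat i t
  rw [if_neg (by omega : i ≠ 0)] at r2
  -- The left integrand is `(1 + s) p̂_i(t) p̂_j(s)` and the right one `2t p̂_i(t) p̂_j(s)`.
  linear_combination (-legendreHat i t) * r1 + 2 * legendreHat j (2 * t - 1) * r2
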